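/- The number of triples (σ₁, σ₂, q) where σ₁, σ₂ ∈ S_5, σ₁σ₂ = (1,2,3,4,5), σ₁ has exactly 2 cycles, σ₂ has exactly 2 cycles, q is a bijection from the cycles of σ₁ to {2,2} (both labels equal 2), and each cycle c of σ₁ intersects nontrivially at least q(c) = 2 cycles of σ₂, equals 10. -/

import Mathlib

open Equiv Finset

/-- The set of cycles (orbits, including fixed points as singletons) of a permutation. -/
def cyclesOf {n : ℕ} (σ : Equiv.Perm (Fin n)) : Finset (Finset (Fin n)) :=
  Finset.univ.image fun x => Finset.univ.filter fun y => σ.SameCycle x y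

/-- The number of cycles of a permutation, counting fixed points as cycles. -/
def cycleCount {n : ℕ} (σ : Equiv.Perm (Fin n)) : ℕ := (cyclesOf σ).card

/-!
The condition does not depend on `q`, so each admissible pair counts `2! = 2` times, and `σ₂` is
determined by `σ₁`. Every cycle of `σ₁` meets both cycles of `σ₂`, hence conversely every cycle of
`σ₂` meets both cycles of `σ₁`, and neither permutation has a fixed point; for `σ₂` this says
`σ₁ x ≠ x + 1`. Five points in two cycles force a cycle of `σ₁` of length 2, necessarily of the
form `(a, a + 2)`, and then `σ₁ = (a, a + 2)(a + 1, a + 4, a + 3)`. The five values of `a` give five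
permutations.
-/

section Counting

theorem card_subtype_sigma_equiv_fin {α β : Type*} (s : α → Finset β) (P : α → Prop) {k : ℕ}
    (hs : ∀ a, P a → #(s a) = k) :
    Nat.card {t : Σ a, s a ≃ Fin k // P t.1} = Nat.card {a // P a} * k.factorial := by
  have labelings (a : {a // P a}) : (s a ≃ Fin k) ≃ Perm (Fin k) :=
    ((s a).equivFinOfCardEq (hs a a.2)).equivCongr (Equiv.refl _)
  rw [Nat.card_congr (subtypeSigmaEquiv (fun a => s a ≃ Fin k) P),
    Nat.card_congr (sigmaCongrRight labelings), Nat.card_congr (sigmaEquivProd _ _),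
    Nat.card_prod, Nat.card_perm, Nat.card_fin]

theorem card_subtype_mul_eq_and {G : Type*} [Group G] (g : G) (P : G → G → Prop) :
    Nat.card {p : G × G // p.1 * p.2 = g ∧ P p.1 p.2} = Nat.card {x // P x (x⁻¹ * g)} :=
  Nat.card_congr
    { toFun := fun p => ⟨p.1.1, by rw [← eq_inv_mul_of_mul_eq p.2.1]; exact p.2.2⟩
      invFun := fun x => ⟨(x.1, x.1⁻¹ * g), mul_inv_cancel_left _ _, x.2⟩
      left_inv := fun p => Subtype.ext (Prod.ext rfl (eq_inv_mul_of_mul_eq p.2.1).symm)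
      right_inv := fun _ => rfl }

end Counting

section Cycles

variable {n m : ℕ} {σ τ : Perm (Fin n)}

/-- The cycle of `σ` through `x`, as a set of points; unlike `Equiv.Perm.cycleOf`, it is
`{x}` when `x` is fixed. -/
def cycleThrough (σ : Perm (Fin n)) (x : Fin n) : Finset (Fin n) := {y | σ.SameCycle x y}

theorem mem_cycleThrough {x y : Fin n} : y ∈ cycleThrough σ x ↔ σ.SameCycle x y :=
  mem_filter_univ y

theorem cycleThrough_mem_cyclesOf (σ : Perm (Fin n)) (x : Fin n) :
    cycleThrough σ x ∈ cyclesOf σ :=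
  mem_image_of_mem _ (mem_univ x)

theorem cycleThrough_eq_of_sameCycle {x y : Fin n} (h : σ.SameCycle x y) :
    cycleThrough σ x = cycleThrough σ y := by
  ext z
  rw [mem_cycleThrough, mem_cycleThrough]
  exact ⟨h.symm.trans, h.trans⟩

theorem eq_cycleThrough_of_mem {c : Finset (Fin n)} (hc : c ∈ cyclesOf σ) {x : Fin n}
    (hx : x ∈ c) : c = cycleThrough σ x := by
  obtain ⟨y, -, rfl⟩ := mem_image.mp hc
  exact cycleThrough_eq_of_sameCycle (mem_cycleThrough.mp hx)

theorem cycleThrough_eq_singleton {x : Fin n} (hx : σ x = x) : cycleThrough σ x = {x} := by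
  ext y
  rw [mem_cycleThrough, mem_singleton]
  exact ⟨fun h => (h.eq_of_left hx).symm, fun h => h ▸ Perm.SameCycle.refl σ x⟩

theorem exists_apply_apply_eq_self_of_lt (h : n < 3 * cycleCount σ) : ∃ x, σ (σ x) = x := by
  obtain ⟨c, hc, hcard⟩ : ∃ c ∈ cyclesOf σ, #{y | cycleThrough σ y = c} < 3 :=
    exists_card_fiber_lt_of_card_lt_mul (by rwa [card_fin, mul_comm])
  obtain ⟨x, -, rfl⟩ := mem_image.mp hc
  have orbit_subset : {x, σ x, σ (σ x)} ⊆
      ({y | cycleThrough σ y = cycleThrough σ x} : Finset (Fin n)) := by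
    have hσ (y : Fin n) : cycleThrough σ (σ y) = cycleThrough σ y :=
      (cycleThrough_eq_of_sameCycle (Perm.sameCycle_apply_right.mpr (.refl σ y))).symm
    simp [insert_subset_iff, hσ]
  refine ⟨x, by_contra fun hx => ((card_le_card orbit_subset).trans_lt hcard).ne ?_⟩
  have hx₁ : σ x ≠ x := fun h₁ => hx (by rw [h₁, h₁])
  exact card_eq_three.mpr ⟨x, σ x, σ (σ x), hx₁.symm, Ne.symm hx, σ.injective.ne hx₁.symm, rfl⟩

/-- Every cycle of `σ` intersects at least `m` cycles of `τ`: the condition on `q` in the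
Dołęga–Féray–Śniady formula when all the labels are equal to `m`. -/
def CyclesMeetAtLeast (m : ℕ) (σ τ : Perm (Fin n)) : Prop :=
  ∀ c ∈ cyclesOf σ, m ≤ #{c' ∈ cyclesOf τ | (c ∩ c').Nonempty}

namespace CyclesMeetAtLeast

theorem apply_ne_self (h : CyclesMeetAtLeast m σ τ) (hm : 1 < m) (x : Fin n) : σ x ≠ x := by
  intro hx
  have meets_subset : {c' ∈ cyclesOf τ | (cycleThrough σ x ∩ c').Nonempty} ⊆
      {cycleThrough τ x} := by
    intro c' hc'
    obtain ⟨hc'τ, y, hy⟩ := mem_filter.mp hc'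
    rw [cycleThrough_eq_singleton hx, mem_inter, mem_singleton] at hy
    obtain ⟨rfl, hyc'⟩ := hy
    exact mem_singleton.mpr (eq_cycleThrough_of_mem hc'τ hyc')
  have := (h _ (cycleThrough_mem_cyclesOf σ x)).trans (card_le_card meets_subset)
  rw [card_singleton] at this
  exact this.not_gt hm

theorem symm (h : CyclesMeetAtLeast (cycleCount τ) σ τ) :
    CyclesMeetAtLeast (cycleCount σ) τ σ := by
  intro c' hc'
  refine (congrArg card (filter_true_of_mem fun c hc => ?_)).ge
  rw [inter_comm]
  exact filter_eq_self.mp (eq_of_subset_of_card_le (filter_subset _ _) (h c hc)) c' hc'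

end CyclesMeetAtLeast

/-- Two permutations with two cycles each, such that each cycle of the first intersects both cycles
of the second. -/
def IsTransversePair (σ τ : Perm (Fin n)) : Prop :=
  cycleCount σ = 2 ∧ cycleCount τ = 2 ∧ CyclesMeetAtLeast 2 σ τ

theorem IsTransversePair.symm (h : IsTransversePair σ τ) :
    IsTransversePair τ σ := by
  obtain ⟨hσ, hτ, hmeet⟩ := h
  rw [← hτ] at hmeet
  exact ⟨hτ, hσ, hσ ▸ hmeet.symm⟩

theorem IsTransversePair.apply_ne_self (h : IsTransversePair σ τ) (x : Fin n) :
    σ x ≠ x :=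
  h.2.2.apply_ne_self one_lt_two x

end Cycles

section FivePoints

/-- The permutation `(a, a + 2)(a + 1, a + 4, a + 3)` of `Fin 5`, where addition is modulo 5. These
are the first factors of the factorizations of the 5-cycle into transverse pairs. -/
def transverseFactor (a : Fin 5) : Perm (Fin 5) :=
  [a, a + 2].formPerm * [a + 1, a + 4, a + 3].formPerm

theorem transverseFactor_injective : Function.Injective transverseFactor := by
  decide

theorem isTransversePair_transverseFactor (a : Fin 5) :
    IsTransversePair (transverseFactor a) ((transverseFactor a)⁻¹ * finRotate 5) := by
  unfold IsTransversePair CyclesMeetAtLeast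
  decide +revert

theorem transverseFactor_apply (a : Fin 5) :
    transverseFactor a a = a + 2 ∧ transverseFactor a (a + 1) = a + 4 ∧
      transverseFactor a (a + 2) = a ∧ transverseFactor a (a + 3) = a + 1 ∧
      transverseFactor a (a + 4) = a + 3 := by
  decide +revert

theorem eq_or_eq_add_fin_five (a x : Fin 5) :
    x = a ∨ x = a + 1 ∨ x = a + 2 ∨ x = a + 3 ∨ x = a + 4 := by
  decide +revert

theorem eq_transverseFactor {σ : Perm (Fin 5)} (hne : ∀ x, σ x ≠ x) (hne_succ : ∀ x, σ x ≠ x + 1)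
    {a : Fin 5} (h₀ : σ a = a + 2) (h₂ : σ (a + 2) = a) : σ = transverseFactor a := by
  have ne_of_apply_eq {x y z : Fin 5} (hy : σ y = z) (hxy : x ≠ y) : σ x ≠ z :=
    fun hx => hxy (σ.injective (hx.trans hy.symm))
  have h₃ : σ (a + 3) = a + 1 := by
    have hne₀ : σ (a + 3) ≠ a + 2 := ne_of_apply_eq h₀ (by simp)
    have hne₂ : σ (a + 3) ≠ a := ne_of_apply_eq h₂ (by simp)
    have hne₄ : σ (a + 3) ≠ a + 4 := fun h => hne_succ (a + 3) (h.trans (add_assoc a 3 1).symm)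
    have := hne (a + 3)
    have := eq_or_eq_add_fin_five a (σ (a + 3))
    tauto
  have h₄ : σ (a + 4) = a + 3 := by
    have hne₀ : σ (a + 4) ≠ a + 2 := ne_of_apply_eq h₀ (by simp)
    have hne₂ : σ (a + 4) ≠ a := ne_of_apply_eq h₂ (by simp)
    have hne₃ : σ (a + 4) ≠ a + 1 := ne_of_apply_eq h₃ (by simp)
    have := hne (a + 4)
    have := eq_or_eq_add_fin_five a (σ (a + 4))
    tauto
  have h₁ : σ (a + 1) = a + 4 := by
    have hne₀ : σ (a + 1) ≠ a + 2 := ne_of_apply_eq h₀ (by simp)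
    have hne₂ : σ (a + 1) ≠ a := ne_of_apply_eq h₂ (by simp)
    have hne₄ : σ (a + 1) ≠ a + 3 := ne_of_apply_eq h₄ (by simp)
    have := hne (a + 1)
    have := eq_or_eq_add_fin_five a (σ (a + 1))
    tauto
  obtain ⟨t₀, t₁, t₂, t₃, t₄⟩ := transverseFactor_apply a
  refine Equiv.ext fun x => ?_
  rcases eq_or_eq_add_fin_five a x with rfl | rfl | rfl | rfl | rfl
  exacts [h₀.trans t₀.symm, h₁.trans t₁.symm, h₂.trans t₂.symm, h₃.trans t₃.symm, h₄.trans t₄.symm]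

theorem mem_range_transverseFactor {σ : Perm (Fin 5)} (hne : ∀ x, σ x ≠ x)
    (hne_succ : ∀ x, σ x ≠ x + 1) {x : Fin 5} (hx : σ (σ x) = x) :
    σ ∈ Set.range transverseFactor := by
  have hx_ne : x ≠ σ x + 1 := fun h => hne_succ (σ x) (hx.trans h)
  rcases eq_or_eq_add_fin_five x (σ x) with h | h | h | h | h
  · exact absurd h (hne x)
  · exact absurd h (hne_succ x)
  · exact ⟨x, (eq_transverseFactor hne hne_succ h (h ▸ hx)).symm⟩
  · have h' : x = σ x + 2 := by simp [h, add_assoc]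
    exact ⟨σ x, (eq_transverseFactor hne hne_succ (hx.trans h') (by rw [← h'])).symm⟩
  · exact absurd (by simp [h, add_assoc]) hx_ne

theorem isTransversePair_iff_mem_range_transverseFactor {σ : Perm (Fin 5)} :
    IsTransversePair σ (σ⁻¹ * finRotate 5) ↔ σ ∈ Set.range transverseFactor := by
  constructor
  · intro h
    have hne_succ (x : Fin 5) : σ x ≠ x + 1 := by
      have := h.symm.apply_ne_self x
      rwa [Perm.mul_apply, finRotate_apply, Ne, Perm.inv_eq_iff_eq, eq_comm] at this
    obtain ⟨x, hx⟩ := exists_apply_apply_eq_self_of_lt (σ := σ) (by rw [h.1]; norm_num)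
    exact mem_range_transverseFactor h.apply_ne_self hne_succ hx
  · rintro ⟨a, rfl⟩
    exact isTransversePair_transverseFactor a

end FivePoints

/-- The number of triples (σ₁, σ₂, q), where σ₁σ₂ = (1,2,3,4,5), both σ₁ and σ₂ have
exactly 2 cycles, q is a bijection from the cycles of σ₁ to the multiset {2,2} (two labels,
both equal to 2), and each cycle c of σ₁ intersects nontrivially at least q(c) = 2 cycles
of σ₂, equals 10. -/
theorem count_triples_S5 :
    Fintype.card
      {t : Σ p : Equiv.Perm (Fin 5) × Equiv.Perm (Fin 5),
            {c // c ∈ cyclesOf p.1} ≃ Fin 2 //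
        t.1.1 * t.1.2 = finRotate 5 ∧
        cycleCount t.1.1 = 2 ∧ cycleCount t.1.2 = 2 ∧
        ∀ c, ∀ hc : c ∈ cyclesOf t.1.1,
          (fun _ : Fin 2 => 2) (t.2 ⟨c, hc⟩) ≤
            ((cyclesOf t.1.2).filter fun c' => (c ∩ c').Nonempty).card} = 10 := by
  have card_pairs : Nat.card {p : Perm (Fin 5) × Perm (Fin 5) //
      p.1 * p.2 = finRotate 5 ∧ IsTransversePair p.1 p.2} = 5 := by
    rw [card_subtype_mul_eq_and, Nat.card_congr
      (subtypeEquivRight fun _ => isTransversePair_iff_mem_range_transverseFactor)]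
    exact (Nat.card_range_of_injective transverseFactor_injective).trans (Nat.card_fin 5)
  have card_triples := card_subtype_sigma_equiv_fin (k := 2)
    (fun p : Perm (Fin 5) × Perm (Fin 5) => cyclesOf p.1)
    (fun p => p.1 * p.2 = finRotate 5 ∧ IsTransversePair p.1 p.2) fun _ hp => hp.2.1
  rw [card_pairs] at card_triples
  rw [← Nat.card_eq_fintype_card]
  exact card_triples
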